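/- Let m be a natural number with m ≥ 1. Then ∫_ℝ (x² + 5ix)/((x−i)^{m+3}·(x+i)^m) dx = (2πi/(m+2)!) · g^{(m+2)}(i), where g : ℂ → ℂ is g(z) = (z² + 5iz)/(z+i)^m. -/

import Mathlib

open MeasureTheory Complex

lemma aux_pne (x : ℝ) : (x : ℂ) + I ≠ 0 := by
  intro h
  have := congrArg Complex.im h
  simp at this

lemma aux_mne (x : ℝ) : (x : ℂ) - I ≠ 0 := by
  intro h
  have := congrArg Complex.im h
  simp at this

lemma aux_pn (x : ℝ) : ‖(x : ℂ) + I‖ = Real.sqrt (1 + x ^ 2) := by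
  rw [Complex.norm_def]
  simp [Complex.normSq_apply]
  ring_nf

lemma aux_mn (x : ℝ) : ‖(x : ℂ) - I‖ = Real.sqrt (1 + x ^ 2) := by
  rw [Complex.norm_def]
  simp [Complex.normSq_apply]
  ring_nf

noncomputable def auxF (a b : ℤ) (x : ℝ) : ℂ := ((x : ℂ) - I) ^ (-a) * ((x : ℂ) + I) ^ (-b)

lemma aux_spos (x : ℝ) : 0 < Real.sqrt (1 + x ^ 2) := Real.sqrt_pos.2 (by positivity)

lemma aux_norm (a b : ℤ) (x : ℝ) : ‖auxF a b x‖ = Real.sqrt (1 + x ^ 2) ^ (-(a + b)) := by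
  rw [auxF, norm_mul, norm_zpow, norm_zpow, aux_pn, aux_mn, ← zpow_add₀ (aux_spos x).ne']
  congr 1; ring

lemma aux_s1 (x : ℝ) : 1 ≤ Real.sqrt (1 + x ^ 2) := by
  rw [Real.one_le_sqrt]; nlinarith [sq_nonneg x]

lemma aux_cont (a b : ℤ) : Continuous (auxF a b) := by
  unfold auxF
  refine Continuous.mul ?_ ?_
  · exact Continuous.zpow₀ (by fun_prop) _ (fun x => Or.inl (aux_mne x))
  · exact Continuous.zpow₀ (by fun_prop) _ (fun x => Or.inl (aux_pne x))

lemma aux_int (a b : ℤ) (h : 2 ≤ a + b) : Integrable (auxF a b) := by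
  refine Integrable.mono' integrable_inv_one_add_sq (aux_cont a b).aestronglyMeasurable ?_
  refine Filter.Eventually.of_forall fun x => ?_
  rw [aux_norm]
  calc _ ≤ Real.sqrt (1 + x ^ 2) ^ (-2 : ℤ) := zpow_le_zpow_right₀ (aux_s1 x) (by omega)
    _ = _ := by
      rw [zpow_neg]
      norm_cast
      rw [Real.sq_sqrt (by positivity)]

lemma aux_le (a b : ℤ) (h : 1 ≤ a + b) (x : ℝ) (hx : x ≠ 0) : ‖auxF a b x‖ ≤ |x|⁻¹ := by
  rw [aux_norm]
  calc _ ≤ Real.sqrt (1 + x ^ 2) ^ (-1 : ℤ) := zpow_le_zpow_right₀ (aux_s1 x) (by omega)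
    _ = (Real.sqrt (1 + x ^ 2))⁻¹ := by simp
    _ ≤ |x|⁻¹ := by
      have := abs_pos.2 hx
      gcongr
      exact Real.abs_le_sqrt (by linarith)

lemma aux_top (a b : ℤ) (h : 1 ≤ a + b) : Filter.Tendsto (auxF a b) Filter.atTop (nhds 0) := by
  refine squeeze_zero_norm' ?_ (tendsto_inv_atTop_zero.comp Filter.tendsto_abs_atTop_atTop)
  filter_upwards [Filter.eventually_ne_atTop 0] with x hx
  exact aux_le a b h x hx

lemma aux_bot (a b : ℤ) (h : 1 ≤ a + b) : Filter.Tendsto (auxF a b) Filter.atBot (nhds 0) := by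
  refine squeeze_zero_norm' ?_ (tendsto_inv_atTop_zero.comp Filter.tendsto_abs_atBot_atTop)
  filter_upwards [Filter.eventually_ne_atBot 0] with x hx
  exact aux_le a b h x hx

lemma aux_deriv (a b : ℤ) (x : ℝ) :
    HasDerivAt (auxF a b) (-a * auxF (a + 1) b x + -b * auxF a (b + 1) x) x := by
  have h1 : HasDerivAt (fun x : ℝ => (x : ℂ) - I) 1 x :=
    (Complex.ofRealCLM.hasDerivAt (x := x)).sub_const I
  have h2 : HasDerivAt (fun x : ℝ => (x : ℂ) + I) 1 x :=
    (Complex.ofRealCLM.hasDerivAt (x := x)).add_const I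
  have h3 := (hasDerivAt_zpow (-a) _ (Or.inl (aux_mne x))).comp x h1
  have h4 := (hasDerivAt_zpow (-b) _ (Or.inl (aux_pne x))).comp x h2
  refine (h3.mul h4).congr_deriv ?_
  simp only [auxF, Function.comp]
  rw [show -(a + 1) = -a - 1 by ring, show -(b + 1) = -b - 1 by ring]
  push_cast
  ring

lemma aux_ibp (a b : ℤ) (h : 1 ≤ a + b) :
    (a : ℂ) * ∫ x, auxF (a + 1) b x = -b * ∫ x, auxF a (b + 1) x := by
  have i1 := (aux_int (a + 1) b (by omega)).const_mul (-a : ℂ)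
  have i2 := (aux_int a (b + 1) (by omega)).const_mul (-b : ℂ)
  have := integral_of_hasDerivAt_of_tendsto (aux_deriv a b) (i1.add i2)
    (aux_bot a b h) (aux_top a b h)
  rw [integral_add i1 i2, integral_const_mul, integral_const_mul] at this
  linear_combination -this

lemma aux_base (k : ℕ) : ∫ x, auxF 1 (k + 1) x = 2 * Real.pi * I * (2 * I) ^ (-(k + 1) : ℤ) := by
  induction k with
  | zero =>
    have : auxF 1 ((0 : ℕ) + 1) = fun x : ℝ => (((1 + x ^ 2)⁻¹ : ℝ) : ℂ) := by
      funext x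
      simp only [auxF]
      simp only [Nat.cast_zero, zero_add, zpow_neg, zpow_one]
      rw [← mul_inv]
      push_cast
      congr 1
      ring_nf
      simp
      ring
    simp only [this]
    rw [integral_complex_ofReal, integral_univ_inv_one_add_sq]
    simp only [Nat.cast_zero, zero_add, zpow_neg, zpow_one]
    field_simp
  | succ k ih =>
    have h0 : ∫ x, auxF 0 (k + 1 + 1) x = 0 := by
      have := aux_ibp 0 (k + 1) (by omega)
      have hk : (k : ℂ) + 1 ≠ 0 := by exact_mod_cast k.succ_ne_zero
      push_cast at this
      rw [zero_mul] at this
      rcases mul_eq_zero.1 this.symm with h | h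
      · exact absurd (neg_eq_zero.1 h) hk
      · exact h
    have h1 : ∀ x, auxF 1 (k + 1 + 1) x =
        (2 * I)⁻¹ * (auxF 1 (k + 1) x - auxF 0 (k + 1 + 1) x) := by
      intro x
      have hp := aux_pne x
      have hq := aux_mne x
      have hz : ((x : ℂ) + I) ^ (-((k : ℤ) + 1)) =
          ((x : ℂ) + I) ^ (-((k : ℤ) + 1 + 1)) * (x + I) := by
        rw [← zpow_add_one₀ hp]; congr 1; try ring
      simp only [auxF, hz, neg_zero, zpow_zero, zpow_neg_one]
      field_simp
      ring
    push_cast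
    simp_rw [h1]
    rw [integral_const_mul, integral_sub (aux_int _ _ (by omega)) (aux_int _ _ (by omega)), h0, ih,
      show (-((k : ℤ) + 1 + 1)) = -((k : ℤ) + 1) - 1 by ring, zpow_sub_one₀ (by simp)]
    ring

lemma aux_main (n : ℕ) : ∀ b : ℤ, 1 ≤ n + b → ∫ x, auxF (n + 1) b x =
    2 * Real.pi * I / (n.factorial : ℂ) * iteratedDeriv n (fun z : ℂ => (z + I) ^ (-b)) I := by
  induction n with
  | zero =>
    intro b hb
    obtain ⟨k, rfl⟩ : ∃ k : ℕ, b = k + 1 := ⟨(b - 1).toNat, by push_cast at hb; omega⟩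
    have := aux_base k
    simp only [Nat.cast_zero, zero_add, this, iteratedDeriv_zero]
    simp [two_mul]
  | succ n ih =>
    intro b hb
    have h1 := aux_ibp (n + 1) b (by push_cast at hb; omega)
    rw [ih (b + 1) (by push_cast at hb; omega)] at h1
    have hd : deriv (fun z : ℂ => (z + I) ^ (-b)) = fun z => (-b : ℂ) * (z + I) ^ (-(b + 1)) := by
      funext z
      rw [deriv_comp_add_const (f := fun z : ℂ => z ^ (-b)), deriv_zpow]
      push_cast
      rw [show -(b + 1) = -b - 1 by ring]
    rw [iteratedDeriv_succ', hd, iteratedDeriv_const_mul_field, Nat.factorial_succ]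
    have hn : (n : ℂ) + 1 ≠ 0 := by exact_mod_cast n.succ_ne_zero
    have hf : (n.factorial : ℂ) ≠ 0 := by exact_mod_cast n.factorial_ne_zero
    push_cast at h1 ⊢
    apply mul_left_cancel₀ hn
    rw [h1]
    field_simp

lemma aux_split (m : ℕ) (w z : ℂ) (hw : w ≠ 0) (h : w = z + I) :
    (z ^ 2 + 5 * I * z) / w ^ m =
      w ^ (-((m : ℤ) - 2)) + 3 * I * w ^ (-((m : ℤ) - 1)) + 4 * w ^ (-(m : ℤ)) := by
  rw [show -((m : ℤ) - 2) = -m + 2 by ring, show -((m : ℤ) - 1) = -m + 1 by ring,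
    zpow_add₀ hw, zpow_add₀ hw, zpow_neg, zpow_natCast, zpow_one, div_eq_mul_inv]
  have : z = w - I := by rw [h]; ring
  rw [this]
  norm_cast
  linear_combination (-4 * (w ^ m)⁻¹) * I_sq

theorem stmt8 (m : ℕ) (hm : 1 ≤ m) :
    ∫ x : ℝ, ((x : ℂ) ^ 2 + 5 * I * (x : ℂ)) /
        (((x : ℂ) - I) ^ (m + 3) * ((x : ℂ) + I) ^ m) =
      (2 * (Real.pi : ℂ) * I / (Nat.factorial (m + 2) : ℂ)) *
        iteratedDeriv (m + 2) (fun z : ℂ => (z ^ 2 + 5 * I * z) / (z + I) ^ m) I := by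
  have hI : I + I ≠ 0 := by rw [← two_mul]; simp
  have hev : (fun z : ℂ => (z ^ 2 + 5 * I * z) / (z + I) ^ m) =ᶠ[nhds I]
      ((fun z => (z + I) ^ (-((m : ℤ) - 2))) + (fun z => (3 * I) * (z + I) ^ (-((m : ℤ) - 1))))
        + (fun z => 4 * (z + I) ^ (-(m : ℤ))) := by
    have : ∀ᶠ z in nhds I, z + I ≠ 0 :=
      (continuous_id.add continuous_const).continuousAt.eventually_ne hI
    filter_upwards [this] with z hz
    exact aux_split m _ z hz rfl
  have hc : ∀ b : ℤ, ContDiffAt ℂ (m + 2 : ℕ) (fun z : ℂ => (z + I) ^ b) I := by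
    intro b
    have : AnalyticAt ℂ (fun z : ℂ => (z + I) ^ b) I :=
      AnalyticAt.zpow (by fun_prop) hI
    exact this.contDiffAt
  have hc2 : ∀ (c : ℂ) (b : ℤ), ContDiffAt ℂ (m + 2 : ℕ) (fun z : ℂ => c * (z + I) ^ b) I :=
    fun c b => contDiffAt_const.mul (hc b)
  have hs : ContDiffAt ℂ (m + 2 : ℕ) ((fun z : ℂ => (z + I) ^ (-((m : ℤ) - 2))) +
      (fun z => (3 * I) * (z + I) ^ (-((m : ℤ) - 1)))) I := (hc _).add (hc2 _ _)
  rw [hev.iteratedDeriv_eq, iteratedDeriv_add hs (hc2 _ _), iteratedDeriv_add (hc _) (hc2 _ _),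
    iteratedDeriv_const_mul_field, iteratedDeriv_const_mul_field]
  have e : ∀ x : ℝ, ((x : ℂ) ^ 2 + 5 * I * (x : ℂ)) /
        (((x : ℂ) - I) ^ (m + 3) * ((x : ℂ) + I) ^ m) =
      auxF ((m + 2 : ℕ) + 1) (m - 2) x + 3 * I * auxF ((m + 2 : ℕ) + 1) (m - 1) x
        + 4 * auxF ((m + 2 : ℕ) + 1) m x := by
    intro x
    rw [mul_comm (((x : ℂ) - I) ^ (m + 3)), ← div_div, aux_split m _ x (aux_pne x) rfl]
    simp only [auxF]
    rw [show (-(((m + 2 : ℕ) : ℤ) + 1)) = -((m + 3 : ℕ) : ℤ) by push_cast; ring,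
      zpow_neg ((x : ℂ) - I), zpow_natCast ((x : ℂ) - I)]
    ring
  simp_rw [e]
  have i1 := aux_int ((m + 2 : ℕ) + 1) (m - 2) (by push_cast; omega)
  have i2 := (aux_int ((m + 2 : ℕ) + 1) (m - 1) (by push_cast; omega)).const_mul (3 * I)
  have i3 := (aux_int ((m + 2 : ℕ) + 1) m (by push_cast; omega)).const_mul 4
  have i12 : Integrable (fun x => auxF ((m + 2 : ℕ) + 1) (m - 2) x +
      3 * I * auxF ((m + 2 : ℕ) + 1) (m - 1) x) := i1.add i2
  rw [integral_add i12 i3, integral_add i1 i2, integral_const_mul, integral_const_mul,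
    aux_main _ _ (by push_cast; omega), aux_main _ _ (by push_cast; omega),
    aux_main _ _ (by push_cast; omega)]
  ring
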